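/- Let L be a full-rank sublattice of ℤⁿ generated by vectors A₁, …, Aₙ. Then there exists a basis B₁, …, Bₙ of ℤⁿ such that for every i ≤ n, the vector Bᵢ lies in the parallelepiped P(0, A₁, …, Aᵢ) = { Σ_{k=1}^{i} α_k A_k : 0 ≤ α_k ≤ 1 }. -/

import Mathlib

/-!
Write `N` for the index of the lattice `L` spanned by the `A k`. Every `N • v` is an integral
combination of the `A k`, with coefficients linear in `v`. Among the `v` involving only the `A k`
with `k ≤ i`, the `i`-th coefficients form an ideal of `ℤ` containing `N`; choose `B i` so that its
`i`-th coefficient is the nonnegative generator of this ideal, hence at most `N`. Triangular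
elimination shows that the `B i` span the ambient group, and subtracting multiples of the `A k` with
`k < i` from `B i` reduces its remaining coefficients modulo `N` without changing the `i`-th one.
-/

section Flag

variable {R M ι : Type*} [CommRing R] [AddCommGroup M] [Module R M] [LinearOrder ι]

/-- The `i`-th step of the flag attached to a coordinate map `c`: the vectors whose coordinates
after the `i`-th one vanish. -/
def coordFlag (c : M →ₗ[R] ι → R) (i : ι) : Submodule R M :=
  ⨅ k ∈ Set.Ioi i, LinearMap.ker (LinearMap.proj k ∘ₗ c)

/-- The ideal of leading coordinates of the `i`-th step of the flag `coordFlag c`. It plays the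
role of the `i`-th pivot in a Hermite normal form. -/
def leadingIdeal (c : M →ₗ[R] ι → R) (i : ι) : Ideal R :=
  (coordFlag c i).map (LinearMap.proj i ∘ₗ c)

variable {c : M →ₗ[R] ι → R} {i : ι}

theorem mem_coordFlag {v : M} : v ∈ coordFlag c i ↔ ∀ k, i < k → c v k = 0 := by
  simp [coordFlag]

theorem apply_mem_leadingIdeal {v : M} (hv : v ∈ coordFlag c i) : c v i ∈ leadingIdeal c i :=
  Submodule.mem_map_of_mem (f := LinearMap.proj i ∘ₗ c) hv

theorem span_range_eq_top_of_leadingIdeal_le [Finite ι] (hc : Function.Injective c) {B : ι → M}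
    (hB : ∀ i, B i ∈ coordFlag c i) (hlead : ∀ i, leadingIdeal c i ≤ Ideal.span {c (B i) i}) :
    Submodule.span R (Set.range B) = ⊤ := by
  cases nonempty_fintype ι
  suffices h : ∀ s : Finset ι, IsLowerSet (s : Set ι) →
      ∀ v, (∀ k ∉ s, c v k = 0) → v ∈ Submodule.span R (Set.range B) from
    Submodule.eq_top_iff'.mpr fun v => h Finset.univ (by simp [isLowerSet_univ]) v (by simp)
  intro s
  induction s using Finset.induction_on_max with
  | empty =>
    intro _ v hv
    have hv0 : v = 0 := hc (by ext k; simp [hv])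
    exact hv0 ▸ Submodule.zero_mem _
  | insert a s hlt ih =>
    intro hs v hv
    have hmem {x y : ι} (hyx : y ≤ x) (hx : x ∈ insert a s) : y ∈ insert a s := hs hyx hx
    have hs' : IsLowerSet (s : Set ι) := fun x y hyx hx =>
      Finset.mem_of_mem_insert_of_ne (hmem hyx (Finset.mem_insert_of_mem hx))
        (hyx.trans_lt (hlt x hx)).ne
    have hva : v ∈ coordFlag c a := mem_coordFlag.mpr fun k hk => hv k fun hks =>
      (Finset.mem_insert.mp hks).elim hk.ne' fun h => (hlt k h).not_gt hk
    obtain ⟨t, ht⟩ := Ideal.mem_span_singleton'.mp (hlead a (apply_mem_leadingIdeal hva))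
    have hrest : v - t • B a ∈ Submodule.span R (Set.range B) := by
      refine ih hs' _ fun k hk => ?_
      rw [map_sub, map_smul, Pi.sub_apply, Pi.smul_apply, smul_eq_mul]
      obtain rfl | hka := eq_or_ne k a
      · rw [ht, sub_self]
      · have hk' : k ∉ insert a s := by simp [hka, hk]
        have hak : a < k := lt_of_not_ge fun h => hk' (hmem h (Finset.mem_insert_self a s))
        rw [hv k hk', mem_coordFlag.mp (hB a) k hak, mul_zero, sub_zero]
    exact (Submodule.sub_mem_iff_left _
      (Submodule.smul_mem _ t (Submodule.subset_span (Set.mem_range_self a)))).mp hrest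

theorem exists_mem_coordFlag_span_singleton_eq_leadingIdeal [IsPrincipalIdealRing R]
    (c : M →ₗ[R] ι → R) (i : ι) :
    ∃ u ∈ coordFlag c i, Ideal.span {c u i} = leadingIdeal c i := by
  obtain ⟨u, hu, hug⟩ := Submodule.IsPrincipal.generator_mem (leadingIdeal c i)
  refine ⟨u, hu, ?_⟩
  rw [← Ideal.span_singleton_generator (leadingIdeal c i), ← hug]
  rfl

end Flag

section Coordinates

variable {R M ι : Type*} [CommRing R] [AddCommGroup M] [Module R M] [Fintype ι]

theorem exists_linearMap_sum_smul_eq_smul {A : ι → M} (hA : LinearIndependent R A) {N : R}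
    (hN : ∀ v, N • v ∈ Submodule.span R (Set.range A)) :
    ∃ c : M →ₗ[R] ι → R, ∀ v, ∑ k, c v k • A k = N • v := by
  let b := Module.Basis.span hA
  refine ⟨b.equivFun.toLinearMap ∘ₗ (LinearMap.lsmul R M N).codRestrict _ hN, fun v => ?_⟩
  have h := congrArg Subtype.val (b.sum_equivFun ⟨N • v, hN v⟩)
  simp only [Submodule.coe_sum, Submodule.coe_smul, b, Module.Basis.span_apply] at h
  exact h

theorem coord_apply_self_eq_single [DecidableEq ι] {A : ι → M} (hA : LinearIndependent R A)
    {N : R} {c : M →ₗ[R] ι → R} (hc : ∀ v, ∑ k, c v k • A k = N • v) (i : ι) :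
    c (A i) = Pi.single i N := by
  refine hA.fintypeLinearCombination_injective ?_
  rw [Fintype.linearCombination_apply, hc, Fintype.linearCombination_apply_single]

theorem coord_injective [IsDomain R] [Module.IsTorsionFree R M] {A : ι → M} {N : R} (hN : N ≠ 0)
    {c : M →ₗ[R] ι → R} (hc : ∀ v, ∑ k, c v k • A k = N • v) : Function.Injective c := by
  intro v w hvw
  refine smul_right_injective M hN ?_
  simp only [← hc, hvw]

end Coordinates

theorem exists_coord_eq_ite_mod {R M ι : Type*} [EuclideanDomain R] [AddCommGroup M] [Module R M]
    [DecidableEq ι] {c : M →ₗ[R] ι → R} {A : ι → M} {N : R}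
    (hcA : ∀ k, c (A k) = Pi.single k N) (s : Finset ι) (u : M) :
    ∃ b, ∀ k, c b k = if k ∈ s then c u k % N else c u k := by
  refine ⟨u - ∑ k ∈ s, (c u k / N) • A k, fun k => ?_⟩
  have hsum : c (∑ k ∈ s, (c u k / N) • A k) k = if k ∈ s then c u k / N * N else 0 := by
    simp [hcA, Finset.sum_apply, Pi.single_apply]
  rw [map_sub, Pi.sub_apply, hsum]
  split_ifs
  · rw [EuclideanDomain.mod_eq_sub_mul_div, mul_comm]
  · rw [sub_zero]

section Integers

variable {M ι : Type*} [AddCommGroup M] [LinearOrder ι]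

theorem exists_nonneg_span_singleton_eq_leadingIdeal (c : M →ₗ[ℤ] ι → ℤ) (i : ι) :
    ∃ u ∈ coordFlag c i, Ideal.span {c u i} = leadingIdeal c i ∧ 0 ≤ c u i := by
  obtain ⟨u, hu, hspan⟩ := exists_mem_coordFlag_span_singleton_eq_leadingIdeal c i
  obtain hpos | hneg := le_total 0 (c u i)
  · exact ⟨u, hu, hspan, hpos⟩
  · refine ⟨-u, neg_mem hu, ?_, ?_⟩
    · rw [map_neg, Pi.neg_apply, Ideal.span_singleton_neg, hspan]
    · simpa using hneg

variable {A : ι → M} {N : ℤ}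

theorem exists_reduced_span_singleton_eq_leadingIdeal [Finite ι] {c : M →ₗ[ℤ] ι → ℤ} (hN : 0 < N)
    (hcA : ∀ k, c (A k) = Pi.single k N) (i : ι) :
    ∃ b ∈ coordFlag c i, Ideal.span {c b i} = leadingIdeal c i ∧
      ∀ k, c b k ∈ Set.Icc 0 N := by
  cases nonempty_fintype ι
  obtain ⟨u, hu, hspan, hnonneg⟩ := exists_nonneg_span_singleton_eq_leadingIdeal c i
  have hAi : A i ∈ coordFlag c i := mem_coordFlag.mpr fun k hk => by simp [hcA, hk.ne']
  have hdvd : c u i ∣ N := by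
    have hmem := apply_mem_leadingIdeal hAi
    rwa [← hspan, hcA, Pi.single_eq_same, Ideal.mem_span_singleton] at hmem
  obtain ⟨b, hb⟩ := exists_coord_eq_ite_mod hcA (Finset.univ.filter (· < i)) u
  have hlt {k : ι} (hk : k < i) : c b k = c u k % N := by simp [hb, hk]
  have hge {k : ι} (hk : i ≤ k) : c b k = c u k := by simp [hb, hk]
  have hzero {k : ι} (hk : i < k) : c b k = 0 := (hge hk.le).trans (mem_coordFlag.mp hu k hk)
  refine ⟨b, mem_coordFlag.mpr fun k => hzero, by rw [hge le_rfl, hspan], fun k => ?_⟩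
  obtain hk | rfl | hk := lt_trichotomy k i
  · rw [hlt hk]
    exact ⟨Int.emod_nonneg _ hN.ne', (Int.emod_lt_of_pos _ hN).le⟩
  · rw [hge le_rfl]
    exact ⟨hnonneg, Int.le_of_dvd hN hdvd⟩
  · rw [hzero hk]
    exact ⟨le_rfl, hN.le⟩

theorem exists_span_eq_top_and_reduced_coeffs [Fintype ι] [Module.IsTorsionFree ℤ M]
    (hA : LinearIndependent ℤ A) (hN : 0 < N) (hNA : ∀ v, N • v ∈ Submodule.span ℤ (Set.range A)) :
    ∃ B : ι → M, Submodule.span ℤ (Set.range B) = ⊤ ∧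
      ∀ i, ∃ m : ι → ℤ, (∀ k, m k ∈ Set.Icc 0 N) ∧ (∀ k, i < k → m k = 0) ∧
        N • B i = ∑ k, m k • A k := by
  obtain ⟨c, hc⟩ := exists_linearMap_sum_smul_eq_smul hA hNA
  choose B hflag hlead hIcc using
    exists_reduced_span_singleton_eq_leadingIdeal hN (coord_apply_self_eq_single hA hc)
  exact ⟨B, span_range_eq_top_of_leadingIdeal_le (coord_injective hN.ne' hc) hflag
      fun i => (hlead i).ge,
    fun i => ⟨c (B i), hIcc i, mem_coordFlag.mp (hflag i), (hc (B i)).symm⟩⟩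

end Integers

theorem map_eq_sum_div_smul {K V M ι : Type*} [DivisionRing K] [CharZero K] [AddCommGroup V]
    [Module K V] [AddCommGroup M] [Fintype ι] (φ : M →+ V) {A : ι → M} {b : M} {N : ℤ}
    (hN : N ≠ 0) {m : ι → ℤ} (h : N • b = ∑ k, m k • A k) :
    φ b = ∑ k, ((m k : K) / N) • φ (A k) := by
  have hNK : (N : K) ≠ 0 := Int.cast_ne_zero.mpr hN
  refine smul_right_injective V hNK ?_
  calc (N : K) • φ b = φ (N • b) := by rw [map_zsmul, Int.cast_smul_eq_zsmul]
    _ = ∑ k, (m k : K) • φ (A k) := by simp [h, Int.cast_smul_eq_zsmul]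
    _ = (N : K) • ∑ k, ((m k : K) / N) • φ (A k) := by
      simp only [Finset.smul_sum, smul_smul]
      refine Finset.sum_congr rfl fun k _ => ?_
      rw [(Int.cast_commute N _).eq, div_mul_cancel₀ _ hNK]

theorem natCard_quotient_smul_mem {R M : Type*} [Ring R] [AddCommGroup M] [Module R M]
    (L : Submodule R M) (v : M) : (Nat.card (M ⧸ L) : ℤ) • v ∈ L := by
  rw [natCast_zsmul, ← Submodule.Quotient.mk_eq_zero, Submodule.Quotient.mk_smul,
    card_nsmul_eq_zero']

theorem finite_quotient_span_range {M ι : Type*} [AddCommGroup M] [Module.Free ℤ M]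
    [Module.Finite ℤ M] [Fintype ι] {A : ι → M} (hA : LinearIndependent ℤ A)
    (hcard : Fintype.card ι = Module.finrank ℤ M) :
    Finite (M ⧸ Submodule.span ℤ (Set.range A)) :=
  Submodule.finiteQuotientOfFreeOfRankEq _ ((finrank_span_eq_card hA).trans hcard)

theorem linearIndependent_int_of_intCast {κ ι K : Type*} [Ring K] [CharZero K]
    {A : ι → κ → ℤ} (hA : LinearIndependent K fun i j => (A i j : K)) : LinearIndependent ℤ A :=
  (hA.restrict_scalars' ℤ).of_comp ((Int.castAddHom K).compLeft κ).toIntLinearMap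

theorem stmt3_general {K V M ι : Type*} [DivisionRing K] [LinearOrder K] [IsStrictOrderedRing K]
    [AddCommGroup V] [Module K V] [AddCommGroup M] [Module.IsTorsionFree ℤ M] [LinearOrder ι]
    [Fintype ι] (φ : M →+ V) (A : ι → M) (hA : LinearIndependent ℤ A)
    [Finite (M ⧸ Submodule.span ℤ (Set.range A))] :
    ∃ B : ι → M, Submodule.span ℤ (Set.range B) = ⊤ ∧
      ∀ i, ∃ α : ι → K, (∀ k, α k ∈ Set.Icc (0 : K) 1) ∧ (∀ k, i < k → α k = 0) ∧
        φ (B i) = ∑ k, α k • φ (A k) := by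
  have hN : (0 : ℤ) < Nat.card (M ⧸ Submodule.span ℤ (Set.range A)) :=
    Int.natCast_pos.mpr Nat.card_pos
  obtain ⟨B, hspan, hB⟩ :=
    exists_span_eq_top_and_reduced_coeffs hA hN (natCard_quotient_smul_mem _)
  refine ⟨B, hspan, fun i => ?_⟩
  obtain ⟨m, hIcc, hzero, hsum⟩ := hB i
  exact ⟨fun k => m k / (Nat.card (M ⧸ Submodule.span ℤ (Set.range A)) : ℤ),
    fun k => ⟨div_nonneg (Int.cast_nonneg (hIcc k).1) (Int.cast_nonneg hN.le),
      div_le_one_of_le₀ (Int.cast_le.mpr (hIcc k).2) (Int.cast_nonneg hN.le)⟩,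
    fun k hk => by simp [hzero k hk],
    map_eq_sum_div_smul φ hN.ne' hsum⟩

theorem stmt3 (n : ℕ) (A : Fin n → (Fin n → ℤ))
    (hA : LinearIndependent ℚ (fun i => (fun j => ((A i j : ℤ) : ℚ)))) :
    ∃ B : Fin n → (Fin n → ℤ),
      Submodule.span ℤ (Set.range B) = (⊤ : Submodule ℤ (Fin n → ℤ)) ∧
      ∀ i : Fin n, ∃ α : Fin n → ℝ,
        (∀ k, α k ∈ Set.Icc (0:ℝ) 1) ∧ (∀ k, i < k → α k = 0) ∧
        (fun j => ((B i j : ℤ) : ℝ)) = ∑ k, α k • (fun j => ((A k j : ℤ) : ℝ)) :=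
  have hAℤ := linearIndependent_int_of_intCast hA
  have := finite_quotient_span_range hAℤ (Module.finrank_fintype_fun_eq_card ℤ).symm
  stmt3_general ((Int.castAddHom ℝ).compLeft (Fin n)) A hAℤ
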